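/- arXiv:1506.06253 — 2 statements merged into one kernel-verified Lean document; each statement's English description precedes it below -/
import Mathlib

section
/- Assume P does not lie on a median of ABC (a line joining a vertex to the midpoint of the opposite side). Then the center Z of the conic C_P lies on the nine-point conic N_H of the quadrangle ABCH, and K⁻¹(Z) lies on the circumconic C̃_O. -/
noncomputable section

/-- The real affine plane. -/
abbrev Pt : Type := ℝ × ℝ

/-- `u` and `v` are parallel vectors (the zero vector is parallel to everything). -/
def Par (u v : Pt) : Prop := ∃ t : ℝ, u = t • v ∨ v = t • u

/-- The centroid of the triangle `ABC`. -/
def cent (A B C : Pt) : Pt := (3⁻¹ : ℝ) • (A + B + C)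

/-- The homothety with center `Z` and ratio `r`. -/
def homoth (Z : Pt) (r : ℝ) (X : Pt) : Pt := Z + r • (X - Z)

/-- The value at `p` of the quadratic polynomial with coefficient vector `c`. -/
def qval (c : Fin 6 → ℝ) (p : Pt) : ℝ :=
  c 0 * p.1 ^ 2 + c 1 * p.1 * p.2 + c 2 * p.2 ^ 2 + c 3 * p.1 + c 4 * p.2 + c 5

/-- `S` is a conic: the zero locus of a real polynomial of total degree 2. -/
def IsConic (S : Set Pt) : Prop :=
  ∃ c : Fin 6 → ℝ, ¬(c 0 = 0 ∧ c 1 = 0 ∧ c 2 = 0) ∧ S = {p | qval c p = 0}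

/-- `Z` is a center of symmetry of `S`. -/
def IsCenterOf (Z : Pt) (S : Set Pt) : Prop :=
  ∀ p ∈ S, (2 : ℝ) • Z - p ∈ S

/-- The gradient at `p` of the quadratic polynomial with coefficients `c`. -/
def qgrad (c : Fin 6 → ℝ) (p : Pt) : Pt :=
  (2 * c 0 * p.1 + c 1 * p.2 + c 3, c 1 * p.1 + 2 * c 2 * p.2 + c 4)

/-- The line through `X` and `Y`. -/
def lineThru (X Y : Pt) : Set Pt := {p | ∃ t : ℝ, p = X + t • (Y - X)}

/-- `L` is the tangent line at the nonsingular point `p` of the conic with coefficients `c`. -/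
def IsTangentLineAt (c : Fin 6 → ℝ) (L : Set Pt) (p : Pt) : Prop :=
  qval c p = 0 ∧ qgrad c p ≠ 0 ∧
  L = {q | (qgrad c p).1 * (q.1 - p.1) + (qgrad c p).2 * (q.2 - p.2) = 0}

/-!
Write `K⁻¹` for the homothety with ratio `-2` at the centroid and `ι` for isotomic conjugation. The
point `K⁻¹ O` satisfies the parallelisms that determine `H`, so `H = K⁻¹ O`. For `P = (x : y : z)`
and `s = xy + yz + zx`, they give `ι(H) = (yz(x² - s) : zx(y² - s) : xy(z² - s))`, which, for
suitably scaled coordinate vectors, is `ι(Q) - 2s ι(P)`. Circumconics of `ABC` are the isotomic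
conjugates of lines, hence every circumconic through `P` and `Q` passes through `H`. By the
nine-point conic theorem, the center `Z` of a conic through `A`, `B`, `C`, `H` lies on the conic
through the midpoints of the six sides of the quadrangle `ABCH`. Since `H = K⁻¹ O` and `O` is the
center of `C̃_O`, the image of `C̃_O` under `K` is also a conic through these midpoints, so both
assertions are instances of the same theorem.
-/

/-- The point with barycentric coordinates `(u, v, w)` with respect to `ABC`. For `u + v + w = 0`
it is the vector with these coordinates. -/
def bary (A B C : Pt) (u v w : ℝ) : Pt := u • A + v • B + w • C

theorem bary_rotate (A B C : Pt) (u v w : ℝ) : bary B C A v w u = bary A B C u v w := by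
  simp only [bary]
  abel

theorem bary_sub (A B C : Pt) (u v w u' v' w' : ℝ) :
    bary A B C u v w - bary A B C u' v' w' = bary A B C (u - u') (v - v') (w - w') := by
  simp only [bary]
  module

theorem bary_left (A B C : Pt) : bary A B C 1 0 0 = A := by simp [bary]

theorem bary_middle (A B C : Pt) : bary A B C 0 1 0 = B := by simp [bary]

theorem bary_right (A B C : Pt) : bary A B C 0 0 1 = C := by simp [bary]

theorem cent_rotate (A B C : Pt) : cent B C A = cent A B C := by
  simp only [cent]
  module

theorem homoth_cent_bary (A B C : Pt) (r u v w : ℝ) :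
    homoth (cent A B C) r (bary A B C u v w) =
      bary A B C ((1 - r) / 3 + r * u) ((1 - r) / 3 + r * v) ((1 - r) / 3 + r * w) := by
  simp only [homoth, cent, bary]
  module

theorem affineIndependent_rotate {A B C : Pt} (h : AffineIndependent ℝ ![A, B, C]) :
    AffineIndependent ℝ ![B, C, A] :=
  h.comm_left.comm_right

theorem exists_eq_bary {A B C : Pt} (h : AffineIndependent ℝ ![A, B, C]) (X : Pt) :
    ∃ u v w : ℝ, u + v + w = 1 ∧ X = bary A B C u v w := by
  have hspan : affineSpan ℝ (Set.range ![A, B, C]) = ⊤ :=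
    h.affineSpan_eq_top_iff_card_eq_finrank_add_one.2 (by simp)
  obtain ⟨t, ht, hX⟩ :=
    eq_affineCombination_of_mem_affineSpan_of_fintype (hspan ▸ AffineSubspace.mem_top ℝ Pt X)
  rw [Finset.affineCombination_eq_linear_combination _ _ _ ht] at hX
  simp only [Fin.sum_univ_three] at ht hX
  exact ⟨t 0, t 1, t 2, ht, hX⟩

theorem eq_zero_of_bary_eq_zero {A B C : Pt} (h : AffineIndependent ℝ ![A, B, C]) {u v w : ℝ}
    (hsum : u + v + w = 0) (h0 : bary A B C u v w = 0) : u = 0 ∧ v = 0 ∧ w = 0 := by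
  have key := affineIndependent_iff.1 h Finset.univ ![u, v, w]
    (by simpa [Fin.sum_univ_three] using hsum) (by simpa [Fin.sum_univ_three, bary] using! h0)
  exact ⟨key 0 (by simp), key 1 (by simp), key 2 (by simp)⟩

theorem mul_eq_mul_of_par_bary {A B C : Pt} (h : AffineIndependent ℝ ![A, B, C])
    {u v w u' v' w' : ℝ} (hsum : u + v + w = 0) (hsum' : u' + v' + w' = 0)
    (hpar : Par (bary A B C u v w) (bary A B C u' v' w')) : v * w' = w * v' := by
  obtain ⟨t, ht | ht⟩ := hpar
  · have h0 : bary A B C (u - t * u') (v - t * v') (w - t * w') = 0 := by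
      rw [← bary_sub, ht]
      simp only [bary]
      module
    obtain ⟨-, hv, hw⟩ := eq_zero_of_bary_eq_zero h (by linear_combination hsum - t * hsum') h0
    linear_combination w' * hv - v' * hw
  · have h0 : bary A B C (u' - t * u) (v' - t * v) (w' - t * w) = 0 := by
      rw [← bary_sub, ht]
      simp only [bary]
      module
    obtain ⟨-, hv, hw⟩ := eq_zero_of_bary_eq_zero h (by linear_combination hsum' - t * hsum) h0
    linear_combination v * hw - w * hv

theorem par_sub_sub_of_collinear {X Y W : Pt} (h : Collinear ℝ {X, Y, W}) :
    Par (Y - X) (W - X) := by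
  obtain ⟨d, hd⟩ := (collinear_iff_of_mem (p₀ := X) (by simp)).1 h
  obtain ⟨r, rfl⟩ := hd Y (by simp)
  obtain ⟨t, rfl⟩ := hd W (by simp)
  simp only [vadd_eq_add, add_sub_cancel_right]
  by_cases hr : r = 0
  · exact ⟨0, .inl (by simp [hr])⟩
  · exact ⟨t / r, .inr (by rw [smul_smul, div_mul_cancel₀ t hr])⟩

theorem trace_eq_bary {A B C D : Pt} {x y z : ℝ} (h : AffineIndependent ℝ ![A, B, C])
    (hsum : x + y + z = 1) (hy : y ≠ 0)
    (hD : Collinear ℝ {A, bary A B C x y z, D} ∧ Collinear ℝ {B, C, D}) :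
    y + z ≠ 0 ∧ D = bary A B C 0 (y / (y + z)) (z / (y + z)) := by
  obtain ⟨d₁, d₂, d₃, hd, rfl⟩ := exists_eq_bary h D
  have hBC := par_sub_sub_of_collinear hD.2
  have hAP := par_sub_sub_of_collinear hD.1
  nth_rw 1 3 [← bary_middle A B C] at hBC
  nth_rw 1 [← bary_right A B C] at hBC
  rw [bary_sub, bary_sub] at hBC
  nth_rw 2 4 [← bary_left A B C] at hAP
  rw [bary_sub, bary_sub] at hAP
  have hd₁ : d₁ = 0 := by
    linarith [mul_eq_mul_of_par_bary h (by ring) (by linarith) hBC]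
  subst hd₁
  have hyz : d₂ * (y + z) = y := by
    linear_combination y * hd - mul_eq_mul_of_par_bary h (by linarith) (by linarith) hAP
  have hne : y + z ≠ 0 := by
    rintro h0
    exact hy (by rw [← hyz, h0, mul_zero])
  refine ⟨hne, ?_⟩
  rw [← eq_div_of_mul_eq hne hyz, show z / (y + z) = d₃ by
    rw [div_eq_iff hne]
    linear_combination hyz - (y + z) * hd]

/-- The isotomcomplement of the point `P = (x : y : z)`: the image under the complement map of the
isotomic conjugate of `P`. It is meaningful only off the Steiner circumellipse. -/
def isotomcomplement (A B C : Pt) (x y z : ℝ) : Pt :=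
  homoth (cent A B C) (-(1 / 2)) (bary A B C (y * z / (x * y + y * z + z * x))
    (x * z / (x * y + y * z + z * x)) (x * y / (x * y + y * z + z * x)))

theorem isotomcomplement_rotate (A B C : Pt) (x y z : ℝ) :
    isotomcomplement B C A y z x = isotomcomplement A B C x y z := by
  rw [isotomcomplement, isotomcomplement, cent_rotate, ← bary_rotate A B C]
  congr 2 <;> ring

theorem isotomcomplement_eq_bary (A B C : Pt) {x y z : ℝ} (hs : x * y + y * z + z * x ≠ 0) :
    isotomcomplement A B C x y z =
      bary A B C (x * (y + z) / (2 * (x * y + y * z + z * x)))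
        (y * (z + x) / (2 * (x * y + y * z + z * x)))
        (z * (x + y) / (2 * (x * y + y * z + z * x))) := by
  rw [isotomcomplement, homoth_cent_bary]
  generalize h : x * y + y * z + z * x = s at hs ⊢
  congr 1 <;> field_simp <;> linear_combination (-3) * h

/-- `D`, `E`, `F` are the traces of `P` on the sides `BC`, `CA`, `AB` of the triangle `ABC`. -/
structure IsCevianTriangle (A B C P D E F : Pt) : Prop where
  left_trace : Collinear ℝ {A, P, D} ∧ Collinear ℝ {B, C, D}
  middle_trace : Collinear ℝ {B, P, E} ∧ Collinear ℝ {A, C, E}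
  right_trace : Collinear ℝ {C, P, F} ∧ Collinear ℝ {A, B, F}

/-- `H` is the generalized orthocenter attached to the triangle `ABC`, the isotomcomplement `Q` and
the traces `D`, `E`, `F`. -/
def IsGenOrthocenter (A B C Q D E F H : Pt) : Prop :=
  Par (H - A) (D - Q) ∧ Par (H - B) (E - Q) ∧ Par (H - C) (F - Q)

/-- `O` is the generalized circumcenter attached to the triangle `ABC`, the isotomcomplement `Q` and
the traces `D`, `E`, `F`. -/
def IsGenCircumcenter (A B C Q D E F O : Pt) : Prop :=
  Par (midpoint ℝ B C - O) (D - Q) ∧ Par (midpoint ℝ C A - O) (E - Q) ∧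
    Par (midpoint ℝ A B - O) (F - Q)

theorem par_smul_left {u v : Pt} {r : ℝ} (h : Par u v) : Par (r • u) v := by
  obtain ⟨t, rfl | rfl⟩ := h
  · exact ⟨r * t, .inl (smul_smul r t v)⟩
  · by_cases hr : r = 0
    · exact ⟨0, .inl (by simp [hr])⟩
    · exact ⟨t / r, .inr (by rw [smul_smul, div_mul_cancel₀ t hr])⟩

theorem homoth_cent_sub_vertex (A B C X : Pt) :
    homoth (cent A B C) (-2) X - A = (2 : ℝ) • (midpoint ℝ B C - X) := by
  simp only [homoth, cent, midpoint_eq_smul_add, invOf_eq_inv]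
  module

theorem IsGenCircumcenter.isGenOrthocenter_homoth {A B C Q D E F O : Pt}
    (hO : IsGenCircumcenter A B C Q D E F O) :
    IsGenOrthocenter A B C Q D E F (homoth (cent A B C) (-2) O) := by
  refine ⟨?_, ?_, ?_⟩
  · rw [homoth_cent_sub_vertex]
    exact par_smul_left hO.1
  · rw [← cent_rotate, homoth_cent_sub_vertex]
    exact par_smul_left hO.2.1
  · rw [← cent_rotate, ← cent_rotate, homoth_cent_sub_vertex]
    exact par_smul_left hO.2.2

/-- The first barycentric coordinate of the isotomic conjugate of the generalized orthocenter of
`(x : y : z)`. The other two are obtained by cyclic rotation. -/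
def orthoWeight (x y z : ℝ) : ℝ := y * z * (x ^ 2 - (x * y + y * z + z * x))

theorem orthoWeight_pairs_sum_ne_zero {x y z : ℝ} (hsum : x + y + z = 1)
    (hx : x ≠ 0) (hy : y ≠ 0) (hz : z ≠ 0) (hs : x * y + y * z + z * x ≠ 0) :
    orthoWeight y z x * orthoWeight z x y + orthoWeight z x y * orthoWeight x y z +
      orthoWeight x y z * orthoWeight y z x ≠ 0 := by
  have key : orthoWeight y z x * orthoWeight z x y + orthoWeight z x y * orthoWeight x y z +
      orthoWeight x y z * orthoWeight y z x =
        4 * (x * y + y * z + z * x) * (x * y * z) ^ 2 := by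
    obtain rfl : z = 1 - x - y := by linarith
    simp only [orthoWeight]
    ring
  rw [key]
  positivity

theorem orthoWeight_mul_eq_of_par {A B C D : Pt} {x y z h₁ h₂ h₃ : ℝ}
    (hABC : AffineIndependent ℝ ![A, B, C]) (hsum : x + y + z = 1)
    (hy : y ≠ 0) (hs : x * y + y * z + z * x ≠ 0) (hh : h₁ + h₂ + h₃ = 1)
    (hD : Collinear ℝ {A, bary A B C x y z, D} ∧ Collinear ℝ {B, C, D})
    (hpar : Par (bary A B C h₁ h₂ h₃ - A) (D - isotomcomplement A B C x y z)) :
    orthoWeight y z x * h₂ = orthoWeight z x y * h₃ := by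
  obtain ⟨hyz, rfl⟩ := trace_eq_bary hABC hsum hy hD
  nth_rw 2 [← bary_left A B C] at hpar
  rw [isotomcomplement_eq_bary A B C hs, bary_sub, bary_sub] at hpar
  simp only [orthoWeight]
  generalize h : x * y + y * z + z * x = s at hs hpar
  have key := mul_eq_mul_of_par_bary hABC (by linarith)
    (by field_simp; linear_combination (-2) * (y + z) * h) hpar
  field_simp at key
  linear_combination (-x) * key + 2 * x * (y * h₃ - z * h₂) * h

theorem IsGenOrthocenter.orthoWeight_mul_eq {A B C D E F : Pt} {x y z h₁ h₂ h₃ : ℝ}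
    (hABC : AffineIndependent ℝ ![A, B, C]) (hsum : x + y + z = 1)
    (hx : x ≠ 0) (hy : y ≠ 0) (hz : z ≠ 0) (hs : x * y + y * z + z * x ≠ 0)
    (hDEF : IsCevianTriangle A B C (bary A B C x y z) D E F)
    (hh : h₁ + h₂ + h₃ = 1)
    (hH : IsGenOrthocenter A B C (isotomcomplement A B C x y z) D E F (bary A B C h₁ h₂ h₃)) :
    orthoWeight x y z * h₁ = orthoWeight y z x * h₂ ∧
      orthoWeight y z x * h₂ = orthoWeight z x y * h₃ ∧
      orthoWeight z x y * h₃ = orthoWeight x y z * h₁ := by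
  obtain ⟨hD, hE, hF⟩ := hDEF
  rw [Set.insert_comm A C] at hE
  have hBCA := affineIndependent_rotate hABC
  refine ⟨?_, orthoWeight_mul_eq_of_par hABC hsum hy hs hh hD hH.1, ?_⟩
  · refine orthoWeight_mul_eq_of_par (D := F) (h₁ := h₃) (affineIndependent_rotate hBCA)
      (by linarith) hx (by rwa [add_rotate]) (by linarith) ?_ ?_
    · rwa [bary_rotate, bary_rotate]
    · rw [bary_rotate, bary_rotate, isotomcomplement_rotate, isotomcomplement_rotate]
      exact hH.2.2
  · refine orthoWeight_mul_eq_of_par (D := E) (h₁ := h₂) hBCA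
      (by linarith) hz (by rwa [← add_rotate]) (by linarith) ?_ ?_
    · rwa [bary_rotate]
    · rw [bary_rotate, isotomcomplement_rotate]
      exact hH.2.1

theorem IsGenOrthocenter.eq {A B C D E F H H' : Pt} {x y z : ℝ}
    (hABC : AffineIndependent ℝ ![A, B, C]) (hsum : x + y + z = 1)
    (hx : x ≠ 0) (hy : y ≠ 0) (hz : z ≠ 0) (hs : x * y + y * z + z * x ≠ 0)
    (hDEF : IsCevianTriangle A B C (bary A B C x y z) D E F)
    (hH : IsGenOrthocenter A B C (isotomcomplement A B C x y z) D E F H)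
    (hH' : IsGenOrthocenter A B C (isotomcomplement A B C x y z) D E F H') : H = H' := by
  obtain ⟨h₁, h₂, h₃, hh, rfl⟩ := exists_eq_bary hABC H
  obtain ⟨k₁, k₂, k₃, hk, rfl⟩ := exists_eq_bary hABC H'
  obtain ⟨e₁, e₂, e₃⟩ := hH.orthoWeight_mul_eq hABC hsum hx hy hz hs hDEF hh
  obtain ⟨f₁, f₂, f₃⟩ := hH'.orthoWeight_mul_eq hABC hsum hx hy hz hs hDEF hk
  have hw := orthoWeight_pairs_sum_ne_zero hsum hx hy hz hs
  generalize orthoWeight x y z = a at *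
  generalize orthoWeight y z x = b at *
  generalize orthoWeight z x y = c at *
  congr 1 <;> apply mul_left_cancel₀ hw
  · linear_combination b * c * hh - b * c * hk + c * e₁ - b * e₃ - c * f₁ + b * f₃
  · linear_combination c * a * hh - c * a * hk + a * e₂ - c * e₁ - a * f₂ + c * f₁
  · linear_combination a * b * hh - a * b * hk + b * e₃ - a * e₂ - b * f₃ + a * f₂

/-- The quadratic form whose zero locus, in barycentric coordinates `(u : v : w)`, is the
circumconic of the reference triangle with coefficients `p`, `q`, `r`. -/
def circumForm (p q r u v w : ℝ) : ℝ := p * v * w + q * w * u + r * u * v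

/-- The leading quadratic form of the polynomial with coefficient vector `c`. -/
def qform (c : Fin 6 → ℝ) (X : Pt) : ℝ := c 0 * X.1 ^ 2 + c 1 * X.1 * X.2 + c 2 * X.2 ^ 2

theorem qval_bary (c : Fin 6 → ℝ) (A B C : Pt) {u v w : ℝ} (hsum : u + v + w = 1) :
    qval c (bary A B C u v w) = u * qval c A + v * qval c B + w * qval c C -
      circumForm (qform c (B - C)) (qform c (C - A)) (qform c (A - B)) u v w := by
  obtain rfl : u = 1 - v - w := by linarith
  simp only [qval, qform, circumForm, bary, Prod.fst_add, Prod.snd_add, Prod.smul_fst,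
    Prod.smul_snd, Prod.fst_sub, Prod.snd_sub, smul_eq_mul]
  ring

theorem quadratic_coeffs_eq_zero_of_qval_eq_zero {c : Fin 6 → ℝ} (h : ∀ X, qval c X = 0) :
    c 0 = 0 ∧ c 1 = 0 ∧ c 2 = 0 := by
  have h₀ := h (0, 0)
  have h₁ := h (1, 0)
  have h₂ := h (-1, 0)
  have h₃ := h (0, 1)
  have h₄ := h (0, -1)
  have h₅ := h (1, 1)
  simp only [qval] at h₀ h₁ h₂ h₃ h₄ h₅
  refine ⟨?_, ?_, ?_⟩ <;> linarith

/-- `S` is a conic through the vertices of the triangle `ABC`. -/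
structure IsCircumconic (A B C : Pt) (S : Set Pt) : Prop where
  isConic : IsConic S
  left_mem : A ∈ S
  middle_mem : B ∈ S
  right_mem : C ∈ S

theorem IsCircumconic.exists_circumForm {A B C : Pt} {S : Set Pt}
    (hABC : AffineIndependent ℝ ![A, B, C]) (hS : IsCircumconic A B C S) :
    ∃ p q r : ℝ, ¬(p = 0 ∧ q = 0 ∧ r = 0) ∧
      ∀ u v w, u + v + w = 1 → (bary A B C u v w ∈ S ↔ circumForm p q r u v w = 0) := by
  obtain ⟨⟨c, hc, rfl⟩, hA, hB, hC⟩ := hS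
  simp only [Set.mem_ofPred_eq] at hA hB hC ⊢
  have hform {u v w : ℝ} (hsum : u + v + w = 1) : qval c (bary A B C u v w) =
      -circumForm (qform c (B - C)) (qform c (C - A)) (qform c (A - B)) u v w := by
    rw [qval_bary c A B C hsum, hA, hB, hC]
    ring
  refine ⟨_, _, _, ?_, fun u v w hsum => by rw [hform hsum, neg_eq_zero]⟩
  rintro ⟨hp, hq, hr⟩
  refine hc (quadratic_coeffs_eq_zero_of_qval_eq_zero fun X => ?_)
  obtain ⟨u, v, w, hsum, rfl⟩ := exists_eq_bary hABC X
  rw [hform hsum, hp, hq, hr]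
  simp [circumForm]

theorem mul_circumForm_of_mul_eq {a b c h₁ h₂ h₃ : ℝ} (p q r : ℝ) (hab : a * h₁ = b * h₂)
    (hbc : b * h₂ = c * h₃) :
    a * circumForm p q r h₁ h₂ h₃ = h₂ * h₃ * (p * a + q * b + r * c) ∧
      b * circumForm p q r h₁ h₂ h₃ = h₃ * h₁ * (p * a + q * b + r * c) ∧
      c * circumForm p q r h₁ h₂ h₃ = h₁ * h₂ * (p * a + q * b + r * c) := by
  simp only [circumForm]
  refine ⟨?_, ?_, ?_⟩
  · linear_combination (q * h₃ + r * h₂) * hab + r * h₂ * hbc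
  · linear_combination r * h₁ * hbc - p * h₃ * hab
  · linear_combination (-p * h₂) * hab - (p * h₂ + q * h₁) * hbc

theorem circumForm_div (p q r u v w t : ℝ) :
    circumForm p q r (u / t) (v / t) (w / t) = circumForm p q r u v w / t ^ 2 := by
  simp only [circumForm]
  ring

-- `(x + y) * (x + z) = x ^ 2 + s` with `s = x * y + y * z + z * x`, so the conjugate of the
-- orthocenter lies on the line joining the conjugates of `P` and `Q`.
theorem sum_mul_orthoWeight_eq_zero {p q r x y z : ℝ} (hP : circumForm p q r x y z = 0)
    (hQ : circumForm p q r (x * (y + z)) (y * (z + x)) (z * (x + y)) = 0) :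
    p * orthoWeight x y z + q * orthoWeight y z x + r * orthoWeight z x y = 0 := by
  simp only [circumForm, orthoWeight] at hP hQ ⊢
  linear_combination hQ - 2 * (x * y + y * z + z * x) * hP

theorem IsCircumconic.genOrthocenter_mem {A B C D E F H : Pt} {x y z : ℝ} {S : Set Pt}
    (hABC : AffineIndependent ℝ ![A, B, C]) (hsum : x + y + z = 1)
    (hx : x ≠ 0) (hy : y ≠ 0) (hz : z ≠ 0) (hs : x * y + y * z + z * x ≠ 0)
    (hDEF : IsCevianTriangle A B C (bary A B C x y z) D E F)
    (hH : IsGenOrthocenter A B C (isotomcomplement A B C x y z) D E F H)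
    (hS : IsCircumconic A B C S) (hP : bary A B C x y z ∈ S)
    (hQ : isotomcomplement A B C x y z ∈ S) : H ∈ S := by
  obtain ⟨p, q, r, -, hform⟩ := hS.exists_circumForm hABC
  obtain ⟨h₁, h₂, h₃, hh, rfl⟩ := exists_eq_bary hABC H
  obtain ⟨e₁, e₂, -⟩ := hH.orthoWeight_mul_eq hABC hsum hx hy hz hs hDEF hh
  have h2s : 2 * (x * y + y * z + z * x) ≠ 0 := mul_ne_zero two_ne_zero hs
  have hQsum : x * (y + z) / (2 * (x * y + y * z + z * x)) +
      y * (z + x) / (2 * (x * y + y * z + z * x)) +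
      z * (x + y) / (2 * (x * y + y * z + z * x)) = 1 := by
    rw [← add_div, ← add_div, div_eq_one_iff_eq h2s]
    ring
  rw [hform _ _ _ hsum] at hP
  rw [isotomcomplement_eq_bary A B C hs, hform _ _ _ hQsum, circumForm_div, div_eq_zero_iff,
    or_iff_left (pow_ne_zero 2 h2s)] at hQ
  obtain ⟨k₁, k₂, k₃⟩ := mul_circumForm_of_mul_eq p q r e₁ e₂
  rw [sum_mul_orthoWeight_eq_zero hP hQ, mul_zero] at k₁ k₂ k₃
  rw [hform _ _ _ hh]
  apply mul_left_cancel₀ (orthoWeight_pairs_sum_ne_zero hsum hx hy hz hs)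
  linear_combination orthoWeight z x y * k₂ + orthoWeight x y z * k₃ + orthoWeight y z x * k₁

/-- `N` is a conic through the midpoints of the six sides of the quadrangle `ABCH`: its nine-point
conic. The diagonal points are left out because the six midpoints suffice. -/
structure IsMidpointConic (A B C H : Pt) (N : Set Pt) : Prop where
  isConic : IsConic N
  mid_BC : midpoint ℝ B C ∈ N
  mid_CA : midpoint ℝ C A ∈ N
  mid_AB : midpoint ℝ A B ∈ N
  mid_AH : midpoint ℝ A H ∈ N
  mid_BH : midpoint ℝ B H ∈ N
  mid_CH : midpoint ℝ C H ∈ N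

theorem midpoint_left_bary (A B C : Pt) (u v w : ℝ) :
    midpoint ℝ A (bary A B C u v w) = bary A B C ((1 + u) / 2) (v / 2) (w / 2) := by
  simp only [midpoint_eq_smul_add, invOf_eq_inv, bary]
  module

theorem qval_midpoint (c : Fin 6 → ℝ) (X Y : Pt) :
    qval c (midpoint ℝ X Y) = (qval c X + qval c Y) / 2 - qform c (X - Y) / 4 := by
  simp only [midpoint_eq_smul_add, invOf_eq_inv, qval, qform, Prod.fst_add, Prod.snd_add,
    Prod.smul_fst, Prod.smul_snd, Prod.fst_sub, Prod.snd_sub, smul_eq_mul]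
  ring

/-- The quadratic polynomial whose zero locus, in barycentric coordinates with `u + v + w = 1`, is
the conic through the midpoints of the sides of the reference triangle with coefficients
`a`, `b`, `c`. -/
def medialForm (a b c u v w : ℝ) : ℝ :=
  a * u * (2 * u - 1) + b * v * (2 * v - 1) + c * w * (2 * w - 1)

theorem IsMidpointConic.exists_medialForm {A B C H : Pt} {N : Set Pt}
    (hN : IsMidpointConic A B C H N) :
    ∃ a b c : ℝ, ∀ u v w, u + v + w = 1 → (bary A B C u v w ∈ N ↔ medialForm a b c u v w = 0) := by
  obtain ⟨⟨k, -, rfl⟩, hBC, hCA, hAB, -, -, -⟩ := hN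
  simp only [Set.mem_ofPred_eq, qval_midpoint] at hBC hCA hAB ⊢
  refine ⟨qval k A, qval k B, qval k C, fun u v w hsum => ?_⟩
  rw [qval_bary k A B C hsum]
  obtain rfl : u = 1 - v - w := by linarith
  apply Eq.congr_left
  simp only [circumForm, medialForm]
  linear_combination 4 * v * w * hBC + 4 * w * (1 - v - w) * hCA + 4 * (1 - v - w) * v * hAB

theorem IsMidpointConic.medialForm_mul_eq {A B C : Pt} {N : Set Pt} {a b c h₁ h₂ h₃ : ℝ}
    (hform : ∀ u v w, u + v + w = 1 → (bary A B C u v w ∈ N ↔ medialForm a b c u v w = 0))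
    (hh : h₁ + h₂ + h₃ = 1) (hN : IsMidpointConic A B C (bary A B C h₁ h₂ h₃) N) :
    a * h₁ = b * h₂ ∧ b * h₂ = c * h₃ := by
  have hA := hN.mid_AH
  have hB := hN.mid_BH
  have hC := hN.mid_CH
  rw [midpoint_left_bary, hform _ _ _ (by linarith)] at hA
  rw [← bary_rotate, midpoint_left_bary, bary_rotate, hform _ _ _ (by linarith)] at hB
  rw [← bary_rotate, ← bary_rotate, midpoint_left_bary, bary_rotate, bary_rotate,
    hform _ _ _ (by linarith)] at hC
  simp only [medialForm] at hA hB hC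
  constructor <;> linarith

theorem two_smul_bary_sub_left (A B C : Pt) (u v w : ℝ) :
    (2 : ℝ) • bary A B C u v w - A = bary A B C (2 * u - 1) (2 * v) (2 * w) := by
  simp only [bary]
  module

theorem IsCircumconic.mul_eq_of_isCenterOf {A B C : Pt} {S : Set Pt} {p q r u v w : ℝ}
    (hS : IsCircumconic A B C S)
    (hform : ∀ u v w, u + v + w = 1 → (bary A B C u v w ∈ S ↔ circumForm p q r u v w = 0))
    (hsum : u + v + w = 1) (hZ : IsCenterOf (bary A B C u v w) S) :
    p * v * (2 * v - 1) = q * u * (2 * u - 1) ∧ q * w * (2 * w - 1) = r * v * (2 * v - 1) ∧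
      r * u * (2 * u - 1) = p * w * (2 * w - 1) := by
  have hA := hZ A hS.left_mem
  have hB := hZ B hS.middle_mem
  have hC := hZ C hS.right_mem
  rw [two_smul_bary_sub_left, hform _ _ _ (by linarith)] at hA
  rw [← bary_rotate, two_smul_bary_sub_left, bary_rotate, hform _ _ _ (by linarith)] at hB
  rw [← bary_rotate, ← bary_rotate, two_smul_bary_sub_left, bary_rotate, bary_rotate,
    hform _ _ _ (by linarith)] at hC
  obtain rfl : w = 1 - u - v := by linarith
  simp only [circumForm] at hA hB hC
  refine ⟨?_, ?_, ?_⟩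
  · linear_combination (v * hB - u * hA + (u - v) * hC) / 2
  · linear_combination ((1 - u - v) * hC - v * hB + (2 * v + u - 1) * hA) / 2
  · linear_combination (u * hA - (1 - u - v) * hC + (1 - 2 * u - v) * hB) / 2

theorem bary_eq_vertex_of_mul_eq_zero {A B C : Pt} {h₁ h₂ h₃ : ℝ} (hh : h₁ + h₂ + h₃ = 1)
    (h₂₃ : h₂ * h₃ = 0) (h₃₁ : h₃ * h₁ = 0) (h₁₂ : h₁ * h₂ = 0) :
    bary A B C h₁ h₂ h₃ = A ∨ bary A B C h₁ h₂ h₃ = B ∨ bary A B C h₁ h₂ h₃ = C := by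
  rcases mul_eq_zero.1 h₂₃ with rfl | rfl
  · rcases mul_eq_zero.1 h₃₁ with rfl | rfl
    · exact .inl (by rw [show h₁ = 1 by linarith, bary_left])
    · exact .inr (.inr (by rw [show h₃ = 1 by linarith, bary_right]))
  · rcases mul_eq_zero.1 h₁₂ with rfl | rfl
    · exact .inr (.inl (by rw [show h₂ = 1 by linarith, bary_middle]))
    · exact .inl (by rw [show h₁ = 1 by linarith, bary_left])

theorem IsMidpointConic.center_mem {A B C H Z : Pt} {N S : Set Pt}
    (hABC : AffineIndependent ℝ ![A, B, C]) (hN : IsMidpointConic A B C H N)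
    (hHA : H ≠ A) (hHB : H ≠ B) (hHC : H ≠ C)
    (hS : IsCircumconic A B C S) (hHS : H ∈ S) (hZ : IsCenterOf Z S) : Z ∈ N := by
  obtain ⟨p, q, r, hpqr, hS_form⟩ := hS.exists_circumForm hABC
  obtain ⟨a, b, c, hN_form⟩ := hN.exists_medialForm
  obtain ⟨h₁, h₂, h₃, hh, rfl⟩ := exists_eq_bary hABC H
  obtain ⟨u, v, w, hsum, rfl⟩ := exists_eq_bary hABC Z
  obtain ⟨hab, hbc⟩ := IsMidpointConic.medialForm_mul_eq hN_form hh hN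
  obtain ⟨k₁, k₂, k₃⟩ := mul_circumForm_of_mul_eq p q r hab hbc
  simp only [(hS_form _ _ _ hh).1 hHS, mul_zero, zero_eq_mul] at k₁ k₂ k₃
  have hL : p * a + q * b + r * c = 0 := by
    by_contra hL
    rcases bary_eq_vertex_of_mul_eq_zero (A := A) (B := B) (C := C) hh (k₁.resolve_right hL)
      (k₂.resolve_right hL) (k₃.resolve_right hL) with h | h | h
    exacts [hHA h, hHB h, hHC h]
  obtain ⟨t₁, t₂, t₃⟩ := hS.mul_eq_of_isCenterOf hS_form hsum hZ
  rw [hN_form _ _ _ hsum]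
  by_contra hne
  refine hpqr ⟨?_, ?_, ?_⟩ <;> apply mul_right_cancel₀ hne <;> simp only [medialForm]
  · linear_combination u * (2 * u - 1) * hL + b * t₁ - c * t₃
  · linear_combination v * (2 * v - 1) * hL + c * t₂ - a * t₁
  · linear_combination w * (2 * w - 1) * hL + a * t₃ - b * t₂

theorem IsConic.preimage_homoth {S : Set Pt} (hS : IsConic S) (G : Pt) {r : ℝ} (hr : r ≠ 0) :
    IsConic (homoth G r ⁻¹' S) := by
  obtain ⟨c, hc, rfl⟩ := hS
  set T : Pt := (1 - r) • G
  refine ⟨![r ^ 2 * c 0, r ^ 2 * c 1, r ^ 2 * c 2, r * (qgrad c T).1, r * (qgrad c T).2, qval c T],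
    fun h => hc ?_, ?_⟩
  · simpa [hr] using h
  · ext X
    have hX : homoth G r X = T + r • X := by
      simp only [homoth, T]
      module
    simp only [Set.mem_preimage, Set.mem_ofPred_eq, hX]
    apply Eq.congr_left
    simp only [qval, qgrad, Prod.fst_add, Prod.snd_add, Prod.smul_fst, Prod.smul_snd, smul_eq_mul,
      Matrix.cons_val]
    ring

theorem homoth_cent_midpoint (A B C : Pt) :
    homoth (cent A B C) (-2) (midpoint ℝ B C) = A := by
  simp only [homoth, cent, midpoint_eq_smul_add, invOf_eq_inv]
  module

theorem homoth_cent_midpoint_homoth (A B C O : Pt) :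
    homoth (cent A B C) (-2) (midpoint ℝ A (homoth (cent A B C) (-2) O)) = (2 : ℝ) • O - A := by
  simp only [homoth, cent, midpoint_eq_smul_add, invOf_eq_inv]
  module

theorem IsCircumconic.isMidpointConic_preimage {A B C O : Pt} {S : Set Pt}
    (hS : IsCircumconic A B C S) (hO : IsCenterOf O S) :
    IsMidpointConic A B C (homoth (cent A B C) (-2) O) (homoth (cent A B C) (-2) ⁻¹' S) where
  isConic := hS.isConic.preimage_homoth _ (by norm_num)
  mid_BC := by
    rw [Set.mem_preimage, homoth_cent_midpoint]
    exact hS.left_mem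
  mid_CA := by
    rw [Set.mem_preimage, ← cent_rotate, homoth_cent_midpoint]
    exact hS.middle_mem
  mid_AB := by
    rw [Set.mem_preimage, ← cent_rotate, ← cent_rotate, homoth_cent_midpoint]
    exact hS.right_mem
  mid_AH := by
    rw [Set.mem_preimage, homoth_cent_midpoint_homoth]
    exact hO A hS.left_mem
  mid_BH := by
    rw [Set.mem_preimage, ← cent_rotate, homoth_cent_midpoint_homoth]
    exact hO B hS.middle_mem
  mid_CH := by
    rw [Set.mem_preimage, ← cent_rotate, ← cent_rotate, homoth_cent_midpoint_homoth]
    exact hO C hS.right_mem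

/-- The line through `V` with direction `d` together with its reflection in `M`, a degenerate
conic with center `M`. It provides a second circumconic when `M` is the midpoint of a side. -/
def linePair (M V d : Pt) : Set Pt :=
  {X | (d.1 * (X.2 - M.2) - d.2 * (X.1 - M.1)) ^ 2 =
    (d.1 * (V.2 - M.2) - d.2 * (V.1 - M.1)) ^ 2}

theorem add_smul_mem_linePair (M V d : Pt) (t : ℝ) : V + t • d ∈ linePair M V d := by
  simp only [linePair, Set.mem_ofPred_eq, Prod.fst_add, Prod.snd_add, Prod.smul_fst, Prod.smul_snd,
    smul_eq_mul]
  ring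

theorem isCenterOf_linePair (M V d : Pt) : IsCenterOf M (linePair M V d) := by
  intro X hX
  simp only [linePair, Set.mem_ofPred_eq, Prod.fst_sub, Prod.snd_sub, Prod.smul_fst, Prod.smul_snd,
    smul_eq_mul] at hX ⊢
  linear_combination hX

theorem isConic_linePair (M V : Pt) {d : Pt} (hd : d ≠ 0) : IsConic (linePair M V d) := by
  set e : ℝ := d.2 * M.1 - d.1 * M.2
  set k : ℝ := d.1 * (V.2 - M.2) - d.2 * (V.1 - M.1)
  refine ⟨![d.2 ^ 2, -2 * d.1 * d.2, d.1 ^ 2, -2 * d.2 * e, 2 * d.1 * e, e ^ 2 - k ^ 2], ?_, ?_⟩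
  · rintro ⟨h₀, -, h₂⟩
    exact hd (Prod.ext (by simpa using h₂) (by simpa using h₀))
  · ext X
    simp only [linePair, Set.mem_ofPred_eq, qval, Matrix.cons_val]
    rw [← sub_eq_zero]
    apply Eq.congr_left
    ring

theorem isCircumconic_linePair {A B C : Pt} (hAB : A ≠ B) :
    IsCircumconic A B C (linePair (midpoint ℝ B C) A (B - A)) := by
  have hB : B ∈ linePair (midpoint ℝ B C) A (B - A) := by
    simpa using add_smul_mem_linePair (midpoint ℝ B C) A (B - A) 1
  refine ⟨isConic_linePair _ _ (sub_ne_zero.2 hAB.symm), ?_, hB, ?_⟩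
  · simpa using add_smul_mem_linePair (midpoint ℝ B C) A (B - A) 0
  · convert isCenterOf_linePair _ _ _ B hB using 1
    simp only [midpoint_eq_smul_add, invOf_eq_inv]
    module

theorem IsCircumconic.swap {A B C : Pt} {S : Set Pt} (h : IsCircumconic A B C S) :
    IsCircumconic A C B S :=
  ⟨h.isConic, h.left_mem, h.right_mem, h.middle_mem⟩

theorem IsCircumconic.rotate {A B C : Pt} {S : Set Pt} (h : IsCircumconic A B C S) :
    IsCircumconic B C A S :=
  ⟨h.isConic, h.middle_mem, h.right_mem, h.left_mem⟩

-- With center the midpoint of `BC` there are two circumconics: the lines `AB` and `AC`, each taken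
-- together with its reflection in the midpoint.
theorem center_ne_midpoint_of_unique {A B C O : Pt} {S : Set Pt}
    (hABC : AffineIndependent ℝ ![A, B, C])
    (huniq : ∀ T, IsCircumconic A B C T → IsCenterOf O T → T = S) : O ≠ midpoint ℝ B C := by
  rintro rfl
  have hAB : A ≠ B := hABC.injective.ne (show (0 : Fin 3) ≠ 1 by decide)
  have hAC : A ≠ C := hABC.injective.ne (show (0 : Fin 3) ≠ 2 by decide)
  have hS₁ := huniq _ (isCircumconic_linePair hAB) (isCenterOf_linePair _ _ _)
  have hS₂ := huniq (linePair (midpoint ℝ B C) A (C - A))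
    (midpoint_comm (R := ℝ) B C ▸ (isCircumconic_linePair hAC).swap) (isCenterOf_linePair _ _ _)
  have hS : IsCircumconic A B C S := hS₁ ▸ isCircumconic_linePair hAB
  have hM : IsCenterOf (midpoint ℝ B C) S := hS₁ ▸ isCenterOf_linePair _ _ _
  have h₁ : A + (2 : ℝ) • (B - A) ∈ S := hS₁ ▸ add_smul_mem_linePair _ _ _ _
  have h₂ : A + (2 : ℝ) • (C - A) ∈ S := hS₂ ▸ add_smul_mem_linePair _ _ _ _
  have h₃ := hM A hS.left_mem
  obtain ⟨p, q, r, hpqr, hform⟩ := hS.exists_circumForm hABC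
  rw [show A + (2 : ℝ) • (B - A) = bary A B C (-1) 2 0 by simp only [bary]; module,
    hform _ _ _ (by norm_num)] at h₁
  rw [show A + (2 : ℝ) • (C - A) = bary A B C (-1) 0 2 by simp only [bary]; module,
    hform _ _ _ (by norm_num)] at h₂
  rw [show (2 : ℝ) • midpoint ℝ B C - A = bary A B C (-1) 1 1 by
      simp only [bary, midpoint_eq_smul_add, invOf_eq_inv]; module,
    hform _ _ _ (by norm_num)] at h₃
  simp only [circumForm] at h₁ h₂ h₃
  exact hpqr ⟨by linarith, by linarith, by linarith⟩

theorem homoth_cent_ne_vertex_of_unique {A B C O : Pt} {S : Set Pt}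
    (hABC : AffineIndependent ℝ ![A, B, C])
    (huniq : ∀ T, IsCircumconic A B C T → IsCenterOf O T → T = S) :
    homoth (cent A B C) (-2) O ≠ A := by
  intro h
  have h0 := homoth_cent_sub_vertex A B C O
  rw [h, sub_self, eq_comm, smul_eq_zero_iff_right two_ne_zero, sub_eq_zero] at h0
  exact center_ne_midpoint_of_unique hABC huniq h0.symm

theorem Z_on_nine_point_conic_general {A B C D E F O H Z : Pt} {x y z : ℝ} {NH CO CP : Set Pt}
    (hABC : AffineIndependent ℝ ![A, B, C]) (hsum : x + y + z = 1)
    (hx : x ≠ 0) (hy : y ≠ 0) (hz : z ≠ 0) (hs : x * y + y * z + z * x ≠ 0)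
    (hDEF : IsCevianTriangle A B C (bary A B C x y z) D E F)
    (hO : IsGenCircumcenter A B C (isotomcomplement A B C x y z) D E F O)
    (hH : IsGenOrthocenter A B C (isotomcomplement A B C x y z) D E F H)
    (hNH : IsMidpointConic A B C H NH)
    (hCO : IsCircumconic A B C CO) (hOcen : IsCenterOf O CO)
    (hCOuniq : ∀ S, IsCircumconic A B C S → IsCenterOf O S → S = CO)
    (hCP : IsCircumconic A B C CP) (hPCP : bary A B C x y z ∈ CP)
    (hQCP : isotomcomplement A B C x y z ∈ CP) (hZ : IsCenterOf Z CP) :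
    Z ∈ NH ∧ homoth (cent A B C) (-2) Z ∈ CO := by
  obtain rfl : H = homoth (cent A B C) (-2) O :=
    hH.eq hABC hsum hx hy hz hs hDEF hO.isGenOrthocenter_homoth
  have hHCP := hCP.genOrthocenter_mem hABC hsum hx hy hz hs hDEF hH hPCP hQCP
  have hBCA := affineIndependent_rotate hABC
  have hHA := homoth_cent_ne_vertex_of_unique hABC hCOuniq
  have hHB := homoth_cent_ne_vertex_of_unique hBCA fun S hS => hCOuniq S hS.rotate.rotate
  have hHC := homoth_cent_ne_vertex_of_unique (affineIndependent_rotate hBCA)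
    fun S hS => hCOuniq S hS.rotate
  simp only [cent_rotate] at hHB hHC
  have hKZ := (hCO.isMidpointConic_preimage hOcen).center_mem hABC hHA hHB hHC hCP hHCP hZ
  exact ⟨hNH.center_mem hABC hHA hHB hHC hCP hHCP hZ, hKZ⟩

theorem Z_on_nine_point_conic
    (A B C P P' Q Q' D E F D₃ E₃ F₃ : Pt) (x y z : ℝ)
    (hABC : AffineIndependent ℝ ![A, B, C])
    (hsum : x + y + z = 1)
    (hPco : P = x • A + y • B + z • C)
    (hx0 : x ≠ 0) (hy0 : y ≠ 0) (hz0 : z ≠ 0)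
    (hx1 : x ≠ 1) (hy1 : y ≠ 1) (hz1 : z ≠ 1)
    (hst : x * y + y * z + z * x ≠ 0)
    (hP' : P' = (y * z / (x * y + y * z + z * x)) • A
        + (x * z / (x * y + y * z + z * x)) • B
        + (x * y / (x * y + y * z + z * x)) • C)
    (hQ : Q = homoth (cent A B C) (-(1 / 2)) P')
    (hQ' : Q' = homoth (cent A B C) (-(1 / 2)) P)
    (hD : Collinear ℝ {A, P, D} ∧ Collinear ℝ {B, C, D})
    (hE : Collinear ℝ {B, P, E} ∧ Collinear ℝ {A, C, E})
    (hF : Collinear ℝ {C, P, F} ∧ Collinear ℝ {A, B, F})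
    (hD₃ : Collinear ℝ {A, P', D₃} ∧ Collinear ℝ {B, C, D₃})
    (hE₃ : Collinear ℝ {B, P', E₃} ∧ Collinear ℝ {A, C, E₃})
    (hF₃ : Collinear ℝ {C, P', F₃} ∧ Collinear ℝ {A, B, F₃})
    (hxy : x ≠ y) (hyz : y ≠ z) (hxz : x ≠ z)
    (O H : Pt)
    (hO : Par (midpoint ℝ B C - O) (D - Q) ∧ Par (midpoint ℝ C A - O) (E - Q) ∧
          Par (midpoint ℝ A B - O) (F - Q))
    (hH : Par (H - A) (D - Q) ∧ Par (H - B) (E - Q) ∧ Par (H - C) (F - Q))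
    (H₁ H₂ H₃ : Pt)
    (hH₁ : Collinear ℝ {A, H, H₁} ∧ Collinear ℝ {B, C, H₁})
    (hH₂ : Collinear ℝ {B, H, H₂} ∧ Collinear ℝ {A, C, H₂})
    (hH₃ : Collinear ℝ {C, H, H₃} ∧ Collinear ℝ {A, B, H₃})
    (NH : Set Pt) (hNHc : IsConic NH)
    (hN1 : midpoint ℝ B C ∈ NH) (hN2 : midpoint ℝ C A ∈ NH) (hN3 : midpoint ℝ A B ∈ NH)
    (hN4 : midpoint ℝ A H ∈ NH) (hN5 : midpoint ℝ B H ∈ NH) (hN6 : midpoint ℝ C H ∈ NH)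
    (hN7 : H₁ ∈ NH) (hN8 : H₂ ∈ NH) (hN9 : H₃ ∈ NH)
    (CO : Set Pt)
    (hCO : IsConic CO) (hACO : A ∈ CO) (hBCO : B ∈ CO) (hCCO : C ∈ CO)
    (hOcen : IsCenterOf O CO)
    (hCOuniq : ∀ S : Set Pt, IsConic S → A ∈ S → B ∈ S → C ∈ S → IsCenterOf O S → S = CO)
    (CP : Set Pt) (Z : Pt)
    (hCPc : IsConic CP) (hACP : A ∈ CP) (hBCP : B ∈ CP) (hCCP : C ∈ CP)
    (hPCP : P ∈ CP) (hQCP : Q ∈ CP)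
    (hCPuniq : ∀ S : Set Pt, IsConic S → A ∈ S → B ∈ S → C ∈ S → P ∈ S → Q ∈ S → S = CP)
    (hZ : IsCenterOf Z CP) (hZuniq : ∀ W : Pt, IsCenterOf W CP → W = Z) :
    Z ∈ NH ∧ homoth (cent A B C) (-2) Z ∈ CO := by
  subst hPco hP' hQ
  exact Z_on_nine_point_conic_general hABC hsum hx0 hy0 hz0 hst ⟨hD, hE, hF⟩ hO hH
    ⟨hNHc, hN1, hN2, hN3, hN4, hN5, hN6⟩ ⟨hCO, hACO, hBCO, hCCO⟩ hOcen
    (fun S hS => hCOuniq S hS.isConic hS.left_mem hS.middle_mem hS.right_mem)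
    ⟨hCPc, hACP, hBCP, hCCP⟩ hPCP hQCP hZ
end
end

section
/- Assume the generalized orthocenter H of P is defined. Then the following are equivalent: (a) H = A; (b) AFQE is a parallelogram, i.e. F − A = Q − E as vectors (equivalently E − A = Q − F); (c) F₃ lies on the line through E₀ and the midpoint of segment BE (which equals K(E₃)); (d) E₃ lies on the line through F₀ and the midpoint of segment CF (which equals K(F₃)). -/
noncomputable section

/-!
Write `E = A + e • (C - A)` and `F = A + f • (B - A)`. Isotomic conjugation reflects the traces on
a side in its midpoint, so `E₃` and `F₃` have parameters `1 - e` and `1 - f`. The point `Q` lies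
on the median from `A` of the triangle `AEF`: `2 (e + f - e f) (Q - A) = (E - A) + (F - A)`.
Now `H = A` means `EQ ∥ AB` and `FQ ∥ AC`, that is, `AFQE` is a parallelogram; by the formula for
`Q` this happens exactly when `2 (1 - e) (1 - f) = 1`, which is also the condition for each of the
two collinearities.
-/

variable {k V : Type*} [Field k] [AddCommGroup V] [Module k V]

section AffineSpace

variable {P : Type*} [AddTorsor V P] {p q r : P}

lemma affineIndependent_triple_iff_linearIndependent_pair :
    AffineIndependent k ![p, q, r] ↔ LinearIndependent k ![q -ᵥ p, r -ᵥ p] := by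
  rw [affineIndependent_iff_linearIndependent_vsub k _ (0 : Fin 3),
    ← linearIndependent_equiv (finSuccAboveEquiv (0 : Fin 3))]
  convert! Iff.rfl
  ext i
  fin_cases i <;> rfl

lemma exists_eq_lineMap_of_collinear (hpq : p ≠ q) (h : Collinear k {p, q, r}) :
    ∃ t : k, r = AffineMap.lineMap p q t := by
  have hr : r ∈ line[k, p, q] :=
    h.mem_affineSpan_of_mem_of_ne (by simp) (by simp) (by simp) hpq
  obtain ⟨t, ht⟩ := mem_affineSpan_pair_iff_exists_lineMap_eq.mp hr
  exact ⟨t, ht.symm⟩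

lemma collinear_iff_mul_eq_mul_of_vsub_eq {b c : V} (hbc : LinearIndependent k ![b, c])
    {q₁ q₂ r₁ r₂ : k} (hq : q -ᵥ p = q₁ • b + q₂ • c) (hr : r -ᵥ p = r₁ • b + r₂ • c) :
    Collinear k {p, q, r} ↔ q₁ * r₂ = q₂ * r₁ := by
  rw [collinear_iff_not_affineIndependent_set, affineIndependent_triple_iff_linearIndependent_pair,
    hq, hr, LinearIndependent.pair_add_smul_add_smul_iff, not_and_not_right]
  exact ⟨fun h ↦ h hbc, fun h _ ↦ h⟩

end AffineSpace

section Triangle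

open AffineMap

variable {A B C : V}

lemma linearIndependent_sub_of_affineIndependent (hABC : AffineIndependent k ![A, B, C]) :
    LinearIndependent k ![B - A, C - A] := by
  simpa only [vsub_eq_sub] using affineIndependent_triple_iff_linearIndependent_pair.mp hABC

lemma add_mul_eq_of_collinear_cevian (hABC : AffineIndependent k ![A, B, C]) {x y z t : k}
    (hsum : x + y + z = 1) (h : Collinear k {B, x • A + y • B + z • C, lineMap A C t}) :
    (x + z) * t = z := by
  have hbc := linearIndependent_sub_of_affineIndependent hABC
  obtain rfl : y = 1 - x - z := by linear_combination hsum
  rw [collinear_iff_mul_eq_mul_of_vsub_eq (q₁ := -(x + z)) (q₂ := z) (r₁ := -1) (r₂ := t) hbc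
    (by rw [vsub_eq_sub]; module) (by rw [vsub_eq_sub, lineMap_apply_module]; module)] at h
  linear_combination -h

lemma eq_one_sub_of_mul_eq_mul {x z x' z' t t' : k} (hz : z ≠ 0) (hz' : z' ≠ 0)
    (hiso : x * x' = z * z') (ht : (x + z) * t = z) (ht' : (x' + z') * t' = z') :
    t' = 1 - t := by
  have hxz : x + z ≠ 0 := left_ne_zero_of_mul (ht.trans_ne hz)
  have hxz' : x' + z' ≠ 0 := left_ne_zero_of_mul (ht'.trans_ne hz')
  apply mul_left_cancel₀ (mul_ne_zero hxz hxz')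
  linear_combination (x' + z') * ht + (x + z) * ht' - hiso

lemma exists_eq_lineMap_of_isotomic {D E : V} (hABC : AffineIndependent k ![A, B, C])
    {x y z x' y' z' : k} (hsum : x + y + z = 1) (hsum' : x' + y' + z' = 1) (hz : z ≠ 0)
    (hz' : z' ≠ 0) (hiso : x * x' = z * z')
    (hD : Collinear k {B, x • A + y • B + z • C, D} ∧ Collinear k {A, C, D})
    (hE : Collinear k {B, x' • A + y' • B + z' • C, E} ∧ Collinear k {A, C, E}) :
    ∃ t ≠ (0 : k), (x' + z') * (1 - t) = z' ∧ D = lineMap A C t ∧ E = lineMap A C (1 - t) := by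
  have hAC : A ≠ C := hABC.injective.ne (show (0 : Fin 3) ≠ 2 by decide)
  obtain ⟨t, rfl⟩ := exists_eq_lineMap_of_collinear hAC hD.2
  obtain ⟨t', rfl⟩ := exists_eq_lineMap_of_collinear hAC hE.2
  have ht := add_mul_eq_of_collinear_cevian hABC hsum hD.1
  have ht' := add_mul_eq_of_collinear_cevian hABC hsum' hE.1
  obtain rfl := eq_one_sub_of_mul_eq_mul hz hz' hiso ht ht'
  exact ⟨t, right_ne_zero_of_mul (ht.trans_ne hz), ht', rfl, rfl⟩

lemma exists_eq_lineMap_of_isotomic_right {D E : V} (hABC : AffineIndependent k ![A, B, C])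
    {x y z x' y' z' : k} (hsum : x + y + z = 1) (hsum' : x' + y' + z' = 1) (hy : y ≠ 0)
    (hy' : y' ≠ 0) (hiso : x * x' = y * y')
    (hD : Collinear k {C, x • A + y • B + z • C, D} ∧ Collinear k {A, B, D})
    (hE : Collinear k {C, x' • A + y' • B + z' • C, E} ∧ Collinear k {A, B, E}) :
    ∃ t ≠ (0 : k), (x' + y') * (1 - t) = y' ∧ D = lineMap A B t ∧ E = lineMap A B (1 - t) := by
  rw [add_right_comm] at hsum hsum' hD hE
  exact exists_eq_lineMap_of_isotomic hABC.comm_right hsum hsum' hy hy' hiso hD hE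

lemma sub_eq_smul_add_smul_iff_parallelogram {Q : V} {e f : k} :
    Q - A = f • (B - A) + e • (C - A) ↔
      lineMap A B f - A = Q - lineMap A C e ∧ lineMap A C e - A = Q - lineMap A B f := by
  simp only [lineMap_apply_module']
  refine ⟨fun h ↦ ⟨?_, ?_⟩, fun h ↦ ?_⟩
  · linear_combination (norm := module) -h
  · linear_combination (norm := module) -h
  · linear_combination (norm := module) -h.1

lemma collinear_midpoints_iff [Invertible (2 : k)] (hABC : AffineIndependent k ![A, B, C])
    (e f : k) :
    Collinear k {lineMap A B (1 - f), midpoint k C A, midpoint k B (lineMap A C e)} ↔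
      2 * ((1 - e) * (1 - f)) = 1 := by
  have hbc := linearIndependent_sub_of_affineIndependent hABC
  have h2 : (2 : k) * ⅟2 = 1 := mul_invOf_self 2
  rw [collinear_iff_mul_eq_mul_of_vsub_eq (q₁ := f - 1) (q₂ := ⅟2) (r₁ := ⅟2 - (1 - f))
    (r₂ := ⅟2 * e) hbc]
  · constructor <;> intro h
    · linear_combination 4 * h + (2 * ⅟2 + 1 - 2 * ((1 - e) * (1 - f))) * h2
    · linear_combination ⅟2 * ⅟2 * h - ⅟2 * ((1 - e) * (1 - f)) * h2
  · simp only [vsub_eq_sub, midpoint_eq_smul_add, lineMap_apply_module]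
    linear_combination (norm := module) h2 • A
  · simp only [vsub_eq_sub, midpoint_eq_smul_add, lineMap_apply_module]
    linear_combination (norm := module) h2 • A

end Triangle

section Complement

open AffineMap

variable {A B C Q H : Pt} {e f x y z : ℝ}

lemma Par.exists_left_eq_smul {u v : Pt} (h : Par u v) (hv : v ≠ 0) : ∃ t : ℝ, u = t • v := by
  obtain ⟨t, rfl | rfl⟩ := h
  · exact ⟨t, rfl⟩
  · exact ⟨t⁻¹, (inv_smul_smul₀ (left_ne_zero_of_smul hv) u).symm⟩

lemma Par.symm {u v : Pt} : Par u v → Par v u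
  | ⟨t, h⟩ => ⟨t, h.symm⟩

lemma cent_right_comm (A B C : Pt) : cent A C B = cent A B C := by
  rw [cent, cent, add_right_comm]

lemma midpoint_eq_homoth_lineMap (A B C : Pt) (t : ℝ) :
    midpoint ℝ B (lineMap A C t) = homoth (cent A B C) (-(1 / 2)) (lineMap A C (1 - t)) := by
  simp only [homoth, cent, midpoint_eq_smul_add, invOf_eq_inv, lineMap_apply_module]
  module

lemma smul_homoth_cent_sub_left (hsum : x + y + z = 1) (he : (x + z) * (1 - e) = z)
    (hf : (x + y) * (1 - f) = y) :
    (2 * (e + f - e * f)) • (homoth (cent A B C) (-(1 / 2)) (x • A + y • B + z • C) - A) =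
      f • (B - A) + e • (C - A) := by
  have hQ : (2 : ℝ) • (homoth (cent A B C) (-(1 / 2)) (x • A + y • B + z • C) - A) =
      (x + z) • (B - A) + (x + y) • (C - A) := by
    obtain rfl : x = 1 - y - z := by linarith
    simp only [homoth, cent]
    module
  have hB : (e + f - e * f) * (x + z) = f := by
    linear_combination f * hsum + (f - 1) * he + hf
  have hC : (e + f - e * f) * (x + y) = e := by
    linear_combination e * hsum + (e - 1) * hf + he
  rw [mul_comm, mul_smul, hQ, smul_add, smul_smul, smul_smul, hB, hC]

lemma homoth_cent_sub_left_eq_iff (hABC : AffineIndependent ℝ ![A, B, C])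
    (hsum : x + y + z = 1) (he₀ : e ≠ 0) (he : (x + z) * (1 - e) = z)
    (hf : (x + y) * (1 - f) = y) :
    homoth (cent A B C) (-(1 / 2)) (x • A + y • B + z • C) - A = f • (B - A) + e • (C - A) ↔
      2 * ((1 - e) * (1 - f)) = 1 := by
  have hbc := linearIndependent_sub_of_affineIndependent hABC
  have hne : f • (B - A) + e • (C - A) ≠ 0 := fun h ↦ he₀ (hbc.eq_zero_of_pair h).2
  have hQ := smul_homoth_cent_sub_left (A := A) (B := B) (C := C) hsum he hf
  generalize homoth _ _ _ - A = q at hQ ⊢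
  rw [← hQ] at hne
  have hq := right_ne_zero_of_smul hne
  rw [← hQ]
  nth_rewrite 1 [← one_smul ℝ q]
  rw [(smul_left_injective ℝ hq).eq_iff]
  constructor <;> intro h <;> linear_combination h

lemma eq_vertex_iff_sub_eq_add (hABC : AffineIndependent ℝ ![A, B, C]) (he : e ≠ 0)
    (hf : f ≠ 0) (hB : Par (H - B) (lineMap A C e - Q)) (hC : Par (H - C) (lineMap A B f - Q)) :
    H = A ↔ Q - A = f • (B - A) + e • (C - A) := by
  have hbc := linearIndependent_sub_of_affineIndependent hABC
  have hAB : A - B ≠ 0 := sub_ne_zero.mpr (sub_ne_zero.mp (hbc.ne_zero 0)).symm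
  have hAC : A - C ≠ 0 := sub_ne_zero.mpr (sub_ne_zero.mp (hbc.ne_zero 1)).symm
  rw [lineMap_apply_module'] at hB hC
  constructor
  · rintro rfl
    obtain ⟨s, hs⟩ := hB.symm.exists_left_eq_smul hAB
    obtain ⟨t, ht⟩ := hC.symm.exists_left_eq_smul hAC
    obtain ⟨rfl, -⟩ := hbc.eq_of_pair (s := s) (t := e) (s' := f) (t' := t)
      (by linear_combination (norm := module) hs - ht)
    linear_combination (norm := module) -hs
  · intro hQ
    have hEQ : e • (C - A) + A - Q = f • (A - B) := by linear_combination (norm := module) -hQ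
    have hFQ : f • (B - A) + A - Q = e • (A - C) := by linear_combination (norm := module) -hQ
    rw [hEQ] at hB
    rw [hFQ] at hC
    obtain ⟨s, hs⟩ := hB.exists_left_eq_smul (smul_ne_zero hf hAB)
    obtain ⟨t, ht⟩ := hC.exists_left_eq_smul (smul_ne_zero he hAC)
    have hs0 : 1 - s * f = 0 :=
      (hbc.eq_zero_of_pair' (t := 1 - t * e) (by linear_combination (norm := module) ht - hs)).1
    linear_combination (norm := module) hs + hs0 • (B - A)

end Complement

theorem H_eq_A_equivalences
    (A B C P P' Q Q' D E F D₃ E₃ F₃ : Pt) (x y z : ℝ)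
    (hABC : AffineIndependent ℝ ![A, B, C])
    (hsum : x + y + z = 1)
    (hPco : P = x • A + y • B + z • C)
    (hx0 : x ≠ 0) (hy0 : y ≠ 0) (hz0 : z ≠ 0)
    (hx1 : x ≠ 1) (hy1 : y ≠ 1) (hz1 : z ≠ 1)
    (hst : x * y + y * z + z * x ≠ 0)
    (hP' : P' = (y * z / (x * y + y * z + z * x)) • A
        + (x * z / (x * y + y * z + z * x)) • B
        + (x * y / (x * y + y * z + z * x)) • C)
    (hQ : Q = homoth (cent A B C) (-(1 / 2)) P')
    (hQ' : Q' = homoth (cent A B C) (-(1 / 2)) P)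
    (hD : Collinear ℝ {A, P, D} ∧ Collinear ℝ {B, C, D})
    (hE : Collinear ℝ {B, P, E} ∧ Collinear ℝ {A, C, E})
    (hF : Collinear ℝ {C, P, F} ∧ Collinear ℝ {A, B, F})
    (hD₃ : Collinear ℝ {A, P', D₃} ∧ Collinear ℝ {B, C, D₃})
    (hE₃ : Collinear ℝ {B, P', E₃} ∧ Collinear ℝ {A, C, E₃})
    (hF₃ : Collinear ℝ {C, P', F₃} ∧ Collinear ℝ {A, B, F₃})
    (H : Pt)
    (hH : Par (H - A) (D - Q) ∧ Par (H - B) (E - Q) ∧ Par (H - C) (F - Q)) :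
    (H = A ↔ (F - A = Q - E ∧ E - A = Q - F)) ∧
    (H = A ↔ Collinear ℝ {F₃, midpoint ℝ C A, midpoint ℝ B E}) ∧
    (H = A ↔ Collinear ℝ {E₃, midpoint ℝ A B, midpoint ℝ C F}) ∧
    midpoint ℝ B E = homoth (cent A B C) (-(1 / 2)) E₃ ∧
    midpoint ℝ C F = homoth (cent A B C) (-(1 / 2)) F₃ := by
  subst hPco hP' hQ
  set s := x * y + y * z + z * x with hs
  have hsum' : y * z / s + x * z / s + x * y / s = 1 := by field_simp; linear_combination -hs
  obtain ⟨e, he₀, he, rfl, rfl⟩ :=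
    exists_eq_lineMap_of_isotomic hABC hsum hsum' hz0 (by positivity) (by ring) hE hE₃
  obtain ⟨f, hf₀, hf, rfl, rfl⟩ :=
    exists_eq_lineMap_of_isotomic_right hABC hsum hsum' hy0 (by positivity) (by ring) hF hF₃
  have hHQ := eq_vertex_iff_sub_eq_add hABC he₀ hf₀ hH.2.1 hH.2.2
  have hHef := hHQ.trans (homoth_cent_sub_left_eq_iff hABC hsum' he₀ he hf)
  refine ⟨hHQ.trans sub_eq_smul_add_smul_iff_parallelogram,
    hHef.trans (collinear_midpoints_iff hABC e f).symm, hHef.trans ?_,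
    midpoint_eq_homoth_lineMap A B C e, ?_⟩
  · rw [midpoint_comm A B, collinear_midpoints_iff hABC.comm_right f e, mul_comm (1 - f)]
  · rw [midpoint_eq_homoth_lineMap A C B f, cent_right_comm]
end
end
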